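/- For every n : ℕ and every target function f : (Fin n → Bool) → Bool, the learning algorithm terminates after at most n + 1 updates: E^(n+1) = ∅, i.e. for all x ∈ (Fin n → Bool), h_{g^(n+1)}(x) = f(x). -/

import Mathlib

instance : Std.Commutative (α := Bool) xor := ⟨Bool.xor_comm⟩
instance : Std.Associative (α := Bool) xor := ⟨Bool.xor_assoc⟩

/-- XOR of the Boolean values `f a` over a finite set `s`. -/
def xorSum {α : Type*} (s : Finset α) (f : α → Bool) : Bool :=
  s.fold xor false f

/-- The Boolean monomial: `m_u(x) = true` iff `x i = true` for every `i` with `u i = true`. -/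
def mGate (n : ℕ) (u x : Fin n → Bool) : Bool :=
  decide (∀ i, u i = true → x i = true)

/-- The Hamming weight `w_H(u) = |1_u|` of a bit string. -/
def hammingWeight (n : ℕ) (u : Fin n → Bool) : ℕ :=
  (Finset.univ.filter fun i => u i = true).card

/-- The output `h_g(x)` of the network with coefficient function `g`:
the XOR over all `u` of `g u AND m_u(x)`. -/
def netOut (n : ℕ) (g : (Fin n → Bool) → Bool) (x : Fin n → Bool) : Bool :=
  xorSum Finset.univ fun u : Fin n → Bool => g u && mGate n u x

/-- The sequence of coefficient functions produced by the learning algorithm for the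
target function `f`: `g⁽⁰⁾` is constant false, and `g⁽ᵏ⁺¹⁾` flips `g⁽ᵏ⁾` exactly on the
erroneous inputs `E⁽ᵏ⁾ = {x | h_{g⁽ᵏ⁾}(x) ≠ f(x)}`. -/
def gSeq (n : ℕ) (f : (Fin n → Bool) → Bool) : ℕ → ((Fin n → Bool) → Bool)
  | 0 => fun _ => false
  | k + 1 => fun u =>
      if netOut n (gSeq n f k) u ≠ f u then !(gSeq n f k u) else gSeq n f k u

theorem xorSum_eq_false {α : Type*} (s : Finset α) (f : α → Bool)
    (h : ∀ a ∈ s, f a = false) : xorSum s f = false := by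
  classical
  unfold xorSum
  induction s using Finset.induction_on with
  | empty => simp
  | insert a s ha ih =>
    rw [Finset.fold_insert ha, ih (fun b hb => h b (Finset.mem_insert_of_mem hb)),
      h a (Finset.mem_insert_self a s)]
    rfl

theorem xorSum_single {α : Type*} [Fintype α] (f : α → Bool) (a : α)
    (h : ∀ b, b ≠ a → f b = false) : xorSum Finset.univ f = f a := by
  classical
  have h1 : xorSum (Finset.univ.erase a) f = false :=
    xorSum_eq_false _ _ (fun b hb => h b (Finset.ne_of_mem_erase hb))
  unfold xorSum at *
  rw [← Finset.insert_erase (Finset.mem_univ a), Finset.fold_insert (Finset.notMem_erase a _), h1]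
  simp

theorem netOut_xor (n : ℕ) (g e : (Fin n → Bool) → Bool) (x : Fin n → Bool) :
    netOut n (fun u => xor (g u) (e u)) x = xor (netOut n g x) (netOut n e x) := by
  unfold netOut xorSum
  rw [← Finset.fold_op_distrib (op := xor)]
  simp only [Bool.and_xor_distrib_right, Bool.xor_false]

theorem gSeq_succ_xor (n : ℕ) (f : (Fin n → Bool) → Bool) (k : ℕ) :
    gSeq n f (k + 1) = fun u => xor (gSeq n f k u) (xor (netOut n (gSeq n f k) u) (f u)) := by
  funext u
  rw [gSeq]
  by_cases h : netOut n (gSeq n f k) u = f u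
  · simp [h]
  · beta_reduce
    rw [if_pos h]
    generalize netOut n (gSeq n f k) u = a at *
    generalize f u = b at *
    cases a <;> cases b <;> simp_all

theorem hw_lt (n : ℕ) (u x : Fin n → Bool) (hne : u ≠ x)
    (h : ∀ i, u i = true → x i = true) : hammingWeight n u < hammingWeight n x := by
  unfold hammingWeight
  apply Finset.card_lt_card
  rw [Finset.ssubset_iff_subset_ne]
  refine ⟨fun i hi => by simpa using h i (by simpa using hi), fun he => hne ?_⟩
  funext i
  have := congrArg (fun s => i ∈ s) he
  simp only [Finset.mem_filter, Finset.mem_univ, true_and, eq_iff_iff] at this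
  exact Bool.eq_iff_iff.mpr this

theorem netOut_gSeq (n : ℕ) (f : (Fin n → Bool) → Bool) (k : ℕ) :
    ∀ x, hammingWeight n x < k → netOut n (gSeq n f k) x = f x := by
  induction k with
  | zero => intro x hx; omega
  | succ k ih =>
    intro x hx
    rw [gSeq_succ_xor, netOut_xor n (gSeq n f k)]
    have : netOut n (fun u => xor (netOut n (gSeq n f k) u) (f u)) x
        = xor (netOut n (gSeq n f k) x) (f x) := by
      rw [netOut, xorSum_single _ x]
      · simp [mGate]
      · intro u hu
        by_cases h : ∀ i, u i = true → x i = true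
        · have := hw_lt n u x hu h
          rw [ih u (by omega)]
          simp
        · simp only [mGate, h, decide_false, Bool.and_false]
    rw [this]
    simp

/-- the learning algorithm terminates after at most `n + 1` updates:
`E⁽ⁿ⁺¹⁾ = ∅`, i.e. the network after `n + 1` updates computes `f` on every input. -/
theorem learning_terminates (n : ℕ) (f : (Fin n → Bool) → Bool) :
    ∀ x : Fin n → Bool, netOut n (gSeq n f (n + 1)) x = f x := by
  intro x
  apply netOut_gSeq
  have := Finset.card_filter_le (Finset.univ : Finset (Fin n)) (fun i => x i = true)
  simp only [Finset.card_univ, Fintype.card_fin] at this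
  unfold hammingWeight
  omega
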